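/- arXiv:0812.1171 — 5 statements merged into one kernel-verified Lean document; each statement's English description precedes it below -/
import Mathlib

section
/- The hypersurface W^{-1}(0) ⊂ ℂ³ has exactly one singular point, namely the origin. That is: the origin satisfies W(0)=0 and ∂₁W(0)=∂₂W(0)=∂₃W(0)=0, and conversely every point a ∈ ℂ³ satisfying W(a)=0 and ∂₁W(a)=∂₂W(a)=∂₃W(a)=0 equals 0. -/
open MvPolynomial

/-- The superpotential `W = -v₁v₂v₃ + v₁⁵ + v₂⁵ + v₃⁵` as a polynomial in three variables. -/
noncomputable def W : MvPolynomial (Fin 3) ℂ :=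
  - (X 0 * X 1 * X 2) + X 0 ^ 5 + X 1 ^ 5 + X 2 ^ 5

/-!
At a singular point of a sum of two forms of distinct degrees, Euler's identity forces each form
to vanish separately. When the first form is `∑ i, X i ^ d` and the second is a monomial `M`,
the equation `xᵢ ∂ᵢ(∑ j, xⱼ ^ d + M) = d xᵢ ^ d + αᵢ M`, with `α` the exponent of `M`, then leaves
`d xᵢ ^ d = 0`.
-/

section

variable {σ R : Type*} [CommRing R]

/-- A singular point, in the sense of the Jacobian criterion, of the affine hypersurface `p = 0`:
both `p` and all its partial derivatives vanish there. The criterion is applied to the equation `p`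
itself, so a repeated factor makes every point of its zero set singular. -/
structure IsSingularPoint (p : MvPolynomial σ R) (a : σ → R) : Prop where
  eval_eq_zero : eval a p = 0
  eval_pderiv_eq_zero : ∀ i, eval a (pderiv i p) = 0

variable {p q : MvPolynomial σ R} {a : σ → R} {m n d : ℕ}

theorem IsSingularPoint.add (hp : IsSingularPoint p a) (hq : IsSingularPoint q a) :
    IsSingularPoint (p + q) a where
  eval_eq_zero := by rw [map_add, hp.eval_eq_zero, hq.eval_eq_zero, add_zero]
  eval_pderiv_eq_zero i := by
    rw [map_add, map_add, hp.eval_pderiv_eq_zero, hq.eval_pderiv_eq_zero, add_zero]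

theorem eval_zero_eq_zero_of_isHomogeneous (hp : p.IsHomogeneous n) (hn : n ≠ 0) :
    eval 0 p = 0 := by
  rw [eval_zero, constantCoeff_eq]
  exact hp.coeff_eq_zero (by simpa only [map_zero] using hn.symm)

theorem isSingularPoint_zero_of_isHomogeneous (hp : p.IsHomogeneous n) (hn : 2 ≤ n) :
    IsSingularPoint p 0 where
  eval_eq_zero := eval_zero_eq_zero_of_isHomogeneous hp (by lia)
  eval_pderiv_eq_zero _ := eval_zero_eq_zero_of_isHomogeneous hp.pderiv (by lia)

theorem isHomogeneous_sum_X_pow [Fintype σ] :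
    (∑ i, X i ^ d : MvPolynomial σ R).IsHomogeneous d :=
  .sum _ _ _ fun i _ ↦ isHomogeneous_X_pow i d

theorem X_mul_pderiv_sum_X_pow [Fintype σ] (i : σ) :
    X i * pderiv i (∑ j, X j ^ d : MvPolynomial σ R) = d • X i ^ d := by
  classical
  simp_rw [map_sum, Finset.mul_sum, X_pow_eq_monomial, X_mul_pderiv_monomial]
  rw [Finset.sum_eq_single_of_mem i (Finset.mem_univ i)
    fun j _ hji ↦ by rw [Finsupp.single_eq_of_ne hji.symm, zero_smul], Finsupp.single_eq_same]

theorem sum_mul_eval_pderiv_of_isHomogeneous [Fintype σ] (hp : p.IsHomogeneous n) (a : σ → R) :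
    ∑ i, a i * eval a (pderiv i p) = n * eval a p := by
  simpa only [map_sum, map_mul, map_natCast, eval_X, nsmul_eq_mul] using
    congrArg (eval a) hp.sum_X_mul_pderiv

theorem IsSingularPoint.eval_right_eq_zero [Finite σ] [NoZeroDivisors R]
    (h : IsSingularPoint (p + q) a) (hp : p.IsHomogeneous m) (hq : q.IsHomogeneous n)
    (hmn : (m : R) ≠ n) : eval a q = 0 := by
  cases nonempty_fintype σ
  have hsum : eval a p + eval a q = 0 := by rw [← map_add, h.eval_eq_zero]
  have heuler : m * eval a p + n * eval a q = 0 := by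
    rw [← sum_mul_eval_pderiv_of_isHomogeneous hp, ← sum_mul_eval_pderiv_of_isHomogeneous hq,
      ← Finset.sum_add_distrib]
    refine Finset.sum_eq_zero fun i _ ↦ ?_
    rw [← mul_add, ← map_add, ← map_add, h.eval_pderiv_eq_zero, mul_zero]
  have hmul : ((m : R) - n) * eval a q = 0 := by linear_combination m * hsum - heuler
  exact (mul_eq_zero.1 hmul).resolve_left (sub_ne_zero.2 hmn)

theorem IsSingularPoint.eq_zero_of_sum_X_pow_add_monomial [Fintype σ] [NoZeroDivisors R]
    {α : σ →₀ ℕ} {c : R} (h : IsSingularPoint (∑ i, X i ^ d + monomial α c) a)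
    (hd : (d : R) ≠ 0) (hdα : (d : R) ≠ α.degree) : a = 0 := by
  have hmonomial : eval a (monomial α c) = 0 :=
    h.eval_right_eq_zero isHomogeneous_sum_X_pow (isHomogeneous_monomial c rfl) hdα
  funext i
  have hpow : d * a i ^ d = 0 :=
    calc d * a i ^ d
      _ = d * a i ^ d + α i * eval a (monomial α c) := by rw [hmonomial, mul_zero, add_zero]
      _ = eval a (X i * pderiv i (∑ j, X j ^ d + monomial α c)) := by
        rw [map_add, mul_add, X_mul_pderiv_sum_X_pow, X_mul_pderiv_monomial]
        simp only [map_add, map_mul, map_natCast, map_pow, nsmul_eq_mul, eval_X]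
      _ = 0 := by rw [map_mul, h.eval_pderiv_eq_zero, mul_zero]
  exact eq_zero_of_pow_eq_zero ((mul_eq_zero.1 hpow).resolve_left hd)

theorem singular_locus_of_W_is_origin_general [Fintype σ] [NoZeroDivisors R]
    {α : σ →₀ ℕ} (c : R) (hd : 2 ≤ d) (hα : 2 ≤ α.degree) (hdR : (d : R) ≠ 0)
    (hdα : (d : R) ≠ α.degree) :
    IsSingularPoint (∑ i, X i ^ d + monomial α c) a ↔ a = 0 where
  mp h := h.eq_zero_of_sum_X_pow_add_monomial hdR hdα
  mpr := by
    rintro rfl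
    exact (isSingularPoint_zero_of_isHomogeneous isHomogeneous_sum_X_pow hd).add
      (isSingularPoint_zero_of_isHomogeneous (isHomogeneous_monomial c rfl) hα)

end

theorem W_eq_sum_X_pow_add_monomial :
    W = ∑ i, X i ^ 5 + monomial (Finsupp.equivFunOnFinite.symm 1) (-1) := by
  simp only [W, monomial_eq, C_neg, C_1, pow_zero, implies_true, Finsupp.prod_fintype,
    Finsupp.equivFunOnFinite_symm_apply_apply, Pi.one_apply, pow_one, Fin.sum_univ_three,
    Fin.prod_univ_three]
  ring

theorem isSingularPoint_W_iff {a : Fin 3 → ℂ} : IsSingularPoint W a ↔ a = 0 := by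
  have hdegree : (Finsupp.equivFunOnFinite.symm (1 : Fin 3 → ℕ)).degree = 3 := by
    simp [Finsupp.degree_eq_sum]
  rw [W_eq_sum_X_pow_add_monomial]
  apply singular_locus_of_W_is_origin_general <;> norm_num [hdegree]

/-- The hypersurface `W⁻¹(0) ⊂ ℂ³` has exactly one singular point, the origin:
the origin lies on the hypersurface and all partial derivatives of `W` vanish there,
and conversely any point of the hypersurface at which all partial derivatives of `W`
vanish is the origin. -/
theorem singular_locus_of_W_is_origin :
    (eval (0 : Fin 3 → ℂ) W = 0 ∧ ∀ i : Fin 3, eval (0 : Fin 3 → ℂ) (pderiv i W) = 0) ∧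
    (∀ a : Fin 3 → ℂ, eval a W = 0 → (∀ i : Fin 3, eval a (pderiv i W) = 0) → a = 0) := by
  obtain ⟨hW, hpderiv⟩ := isSingularPoint_W_iff.2 rfl
  exact ⟨⟨hW, hpderiv⟩, fun a ha hda ↦ isSingularPoint_W_iff.1 ⟨ha, hda⟩⟩
end

section
/- For every index j in {1,2,3}, the power v_j⁶ lies in I·m² + m⁸, where I = (∂₁W, ∂₂W, ∂₃W) ⊂ ℂ[[v₁,v₂,v₃]] and m is the maximal ideal (v₁,v₂,v₃). -/
open MvPowerSeries

/-- The partial derivatives `∂₁W = -v₂v₃ + 5v₁⁴`, `∂₂W = -v₁v₃ + 5v₂⁴`,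
`∂₃W = -v₁v₂ + 5v₃⁴` of `W = -v₁v₂v₃ + v₁⁵ + v₂⁵ + v₃⁵`, as formal power series. -/
noncomputable def dW : Fin 3 → MvPowerSeries (Fin 3) ℂ :=
  ![ - (X 1 * X 2) + 5 * X 0 ^ 4,
     - (X 0 * X 2) + 5 * X 1 ^ 4,
     - (X 0 * X 1) + 5 * X 2 ^ 4 ]

/-- The Jacobian ideal `I = (∂₁W, ∂₂W, ∂₃W) ⊂ ℂ[[v₁,v₂,v₃]]`. -/
noncomputable def JacobianIdeal : Ideal (MvPowerSeries (Fin 3) ℂ) :=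
  Ideal.span {dW 0, dW 1, dW 2}

/-- The maximal ideal `m = (v₁,v₂,v₃)` of `ℂ[[v₁,v₂,v₃]]`. -/
noncomputable def mIdeal : Ideal (MvPowerSeries (Fin 3) ℂ) :=
  Ideal.span {X 0, X 1, X 2}

/-!
Modulo the Jacobian ideal `I`, `5 v₁⁴ ≡ v₂v₃`, `5 v₂⁴ ≡ v₃v₁` and `5 v₃⁴ ≡ v₁v₂`. Hence
`5 v₁⁶ ≡ v₁²v₂v₃ = (v₃v₁)(v₁v₂) ≡ 5 v₂⁴(v₁v₂) ≡ 25 v₂⁴v₃⁴`, where each step changes the expression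
by a generator of `I` times an element of `m²`. The last term lies in `m⁸`, and `5` is a unit.
The three congruences permute cyclically: the `i`-th is `5 vᵢ⁴ ≡ vᵢ₊₁vᵢ₊₂` with indices modulo `3`.
-/

theorem mul_pow_add_two_sub_mem_mul_sq {R : Type*} [CommRing R] {J m : Ideal R}
    {a b c x y z : R} {p q r : ℕ} (hx : x ∈ m) (hy : y ∈ m)
    (hJx : a * x ^ p - y * z ∈ J) (hJy : b * y ^ q - z * x ∈ J) (hJz : c * z ^ r - x * y ∈ J)
    (hq : 2 ≤ q) :
    a * x ^ (p + 2) - b * c * (y ^ q * z ^ r) ∈ J * m ^ 2 := by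
  have hxx : x ^ 2 ∈ m ^ 2 := Ideal.pow_mem_pow hx 2
  have hxy : x * y ∈ m ^ 2 := pow_two m ▸ Ideal.mul_mem_mul hx hy
  have hyq : b * y ^ q ∈ m ^ 2 :=
    Ideal.mul_mem_left _ _ (Ideal.pow_le_pow_right hq (Ideal.pow_mem_pow hy q))
  have expansion : a * x ^ (p + 2) - b * c * (y ^ q * z ^ r) =
      (a * x ^ p - y * z) * x ^ 2 - (b * y ^ q - z * x) * (x * y)
        - (c * z ^ r - x * y) * (b * y ^ q) := by
    ring
  rw [expansion]
  exact sub_mem (sub_mem (Ideal.mul_mem_mul hJx hxx) (Ideal.mul_mem_mul hJy hxy))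
    (Ideal.mul_mem_mul hJz hyq)

theorem isUnit_ofNat_mvPowerSeries {σ K : Type*} [DivisionSemiring K] [CharZero K]
    (n : ℕ) [n.AtLeastTwo] : IsUnit (ofNat(n) : MvPowerSeries σ K) := by
  simpa only [map_ofNat] using (IsUnit.mk0 (ofNat(n) : K) (OfNat.ofNat_ne_zero n)).map C

theorem dW_eq_sub (i : Fin 3) : dW i = 5 * X i ^ 4 - X (i + 1) * X (i + 2) := by
  fin_cases i
  · change -(X 1 * X 2) + 5 * X 0 ^ 4 = 5 * X 0 ^ 4 - X 1 * X 2
    ring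
  · change -(X 0 * X 2) + 5 * X 1 ^ 4 = 5 * X 1 ^ 4 - X 2 * X 0
    ring
  · change -(X 0 * X 1) + 5 * X 2 ^ 4 = 5 * X 2 ^ 4 - X 0 * X 1
    ring

theorem dW_mem_jacobianIdeal (i : Fin 3) : dW i ∈ JacobianIdeal :=
  Ideal.subset_span (by fin_cases i <;> simp)

theorem X_mem_mIdeal (i : Fin 3) : X i ∈ mIdeal :=
  Ideal.subset_span (by fin_cases i <;> simp)

theorem pure_sixth_power_mem_jacobian_mul_m2_add_m8_general {R : Type*} [CommRing R]
    {J m : Ideal R} {a v : Fin 3 → R} {n : Fin 3 → ℕ} (hv : ∀ i, v i ∈ m)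
    (hJ : ∀ i, a i * v i ^ n i - v (i + 1) * v (i + 2) ∈ J) {j : Fin 3}
    (ha : IsUnit (a j)) (hn : 2 ≤ n (j + 1)) :
    v j ^ (n j + 2) ∈ J * m ^ 2 + m ^ (n (j + 1) + n (j + 2)) := by
  have hJ₁ : a (j + 1) * v (j + 1) ^ n (j + 1) - v (j + 2) * v j ∈ J := by
    have h := hJ (j + 1)
    rwa [show j + 1 + 1 = j + 2 by grind, show j + 1 + 2 = j by grind] at h
  have hJ₂ : a (j + 2) * v (j + 2) ^ n (j + 2) - v j * v (j + 1) ∈ J := by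
    have h := hJ (j + 2)
    rwa [show j + 2 + 1 = j by grind, show j + 2 + 2 = j + 1 by grind] at h
  have hprod : a (j + 1) * a (j + 2) * (v (j + 1) ^ n (j + 1) * v (j + 2) ^ n (j + 2)) ∈
      m ^ (n (j + 1) + n (j + 2)) := by
    rw [pow_add]
    exact Ideal.mul_mem_left _ _
      (Ideal.mul_mem_mul (Ideal.pow_mem_pow (hv _) _) (Ideal.pow_mem_pow (hv _) _))
  rw [← Ideal.unit_mul_mem_iff_mem _ ha]
  simpa only [sub_add_cancel, Submodule.add_eq_sup] using Submodule.add_mem_sup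
    (mul_pow_add_two_sub_mem_mul_sq (hv j) (hv (j + 1)) (hJ j) hJ₁ hJ₂ hn) hprod

/-- For every index `j`, the power `v_j⁶` lies in `I·m² + m⁸`. -/
theorem pure_sixth_power_mem_jacobian_mul_m2_add_m8 :
    ∀ j : Fin 3, X j ^ 6 ∈ JacobianIdeal * mIdeal ^ 2 + mIdeal ^ 8 := by
  intro j
  exact pure_sixth_power_mem_jacobian_mul_m2_add_m8_general (n := fun _ => 4) X_mem_mIdeal
    (fun i => dW_eq_sub i ▸ dW_mem_jacobianIdeal i) (isUnit_ofNat_mvPowerSeries 5) (by norm_num)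
end

section
/- Every homogeneous polynomial of degree 5 in ℂ[v₁,v₂,v₃] that is invariant under G is a ℂ-linear combination of v₁⁵, v₂⁵, and v₃⁵. -/
open MvPolynomial

/-- The group `G ≅ (ℤ/5)²` of diagonal matrices `diag(g₀,g₁,g₂)` whose entries are
fifth roots of unity and whose determinant is `1`, recorded by its diagonal entries. -/
def Gset : Set (Fin 3 → ℂ) :=
  {g | (∀ i, g i ^ 5 = 1) ∧ g 0 * g 1 * g 2 = 1}

/-!
A diagonal substitution scales each monomial `X ^ m` by a character of the group of diagonal
matrices, so an invariant polynomial is a combination of invariant monomials. Testing a monomial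
against the elements with entries `ζ` and `ζ⁻¹` in two positions and `1` elsewhere, for `ζ` a
primitive `n`-th root of unity, shows that its exponents are all congruent modulo `n`. In degree
`n`, if all exponents are below `n` then they are equal, so the number of variables divides `n`;
otherwise one exponent takes up the whole degree.
-/

section Monomials

variable {σ : Type*} [Fintype σ] {n : ℕ}

theorem modEq_of_prod_pow_eq_one {M : Type*} [CommMonoid M] {ζ : M} (hζ : IsPrimitiveRoot ζ n)
    (hn : n ≠ 0) {m : σ → ℕ}
    (hm : ∀ g : σ → M, (∀ k, g k ^ n = 1) → ∏ k, g k = 1 → ∏ k, g k ^ m k = 1) (i j : σ) :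
    m i ≡ m j [MOD n] := by
  classical
  obtain ⟨ω, hζω⟩ := (hζ.isUnit hn).exists_right_inv
  have hω : ω ^ n = 1 := by simpa [mul_pow, hζ.pow_eq_one] using congrArg (· ^ n) hζω
  have hsingle (l : σ) (a : M) : ∏ k, (Pi.mulSingle l a : σ → M) k ^ m k = a ^ m l := by
    rw [Fintype.prod_eq_single l fun k hk ↦ by rw [Pi.mulSingle_eq_of_ne hk, one_pow],
      Pi.mulSingle_eq_same]
  have hprod : ζ ^ m i * ω ^ m j = 1 := by
    simpa only [mul_pow, Finset.prod_mul_distrib, hsingle] using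
      hm (fun k ↦ (Pi.mulSingle i ζ : σ → M) k * (Pi.mulSingle j ω : σ → M) k)
        (fun k ↦ by simp [mul_pow, Pi.mulSingle_apply, ite_pow, hζ.pow_eq_one, hω])
        (by simp [Finset.prod_mul_distrib, hζω])
  have hpow : ζ ^ m i = ζ ^ m j :=
    calc ζ ^ m i = ζ ^ m i * (ζ * ω) ^ m j := by rw [hζω, one_pow, mul_one]
      _ = ζ ^ m i * ω ^ m j * ζ ^ m j := by rw [mul_pow, mul_comm (ζ ^ m j), mul_assoc]
      _ = ζ ^ m j := by rw [hprod, one_mul]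
  rwa [(hζ.isOfFinOrder hn).pow_eq_pow_iff_modEq, ← hζ.eq_orderOf] at hpow

theorem exists_eq_single_of_modEq {m : σ →₀ ℕ} (hcard : ¬ Fintype.card σ ∣ n)
    (hdeg : m.degree = n) (hmod : ∀ i j, m i ≡ m j [MOD n]) : ∃ i, m = Finsupp.single i n := by
  obtain ⟨i, hi⟩ : ∃ i, n ≤ m i := by
    by_contra! hlt
    have hconst (i j : σ) : m i = m j := (hmod i j).eq_of_lt_of_lt (hlt i) (hlt j)
    refine hcard ?_
    rw [← hdeg, Finsupp.degree_eq_sum]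
    rcases isEmpty_or_nonempty σ with _ | ⟨⟨j⟩⟩
    · simp
    · simp [hconst _ j]
  obtain ⟨r, hr⟩ := exists_add_of_le (Finsupp.single_le_iff.mpr hi)
  have hr_deg : r.degree = 0 := by simpa [hdeg] using congrArg Finsupp.degree hr
  exact ⟨i, by rw [hr, (Finsupp.degree_eq_zero_iff r).mp hr_deg, add_zero]⟩

end Monomials

section DiagonalSubstitution

variable {σ R : Type*} [CommSemiring R] {n : ℕ} {f : MvPolynomial σ R}

theorem coeff_aeval_C_mul_X (g : σ → R) (f : MvPolynomial σ R) (m : σ →₀ ℕ) :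
    coeff m (aeval (fun i ↦ C (g i) * X i) f) = (m.prod fun i k ↦ g i ^ k) * coeff m f := by
  induction f using MvPolynomial.induction_on' with
  | monomial u a =>
    have hscale : aeval (fun i ↦ C (g i) * X i) (monomial u a) =
        C (u.prod fun i k ↦ g i ^ k) * monomial u a := by
      rw [aeval_monomial, monomial_eq]
      simp only [mul_pow, Finsupp.prod_mul, algebraMap_eq, map_finsuppProd, map_pow]
      exact mul_left_comm _ _ _
    classical
    rw [hscale, coeff_C_mul, coeff_monomial]
    split_ifs with hu
    · rw [hu]
    · simp only [mul_zero]
  | add p q hp hq => rw [map_add, coeff_add, coeff_add, hp, hq, mul_add]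

theorem prod_pow_eq_one_of_aeval_C_mul_X_eq [IsCancelMulZero R] {g : σ → R}
    (hg : aeval (fun i ↦ C (g i) * X i) f = f) {m : σ →₀ ℕ} (hm : m ∈ f.support) :
    (m.prod fun i k ↦ g i ^ k) = 1 := by
  rw [← mul_eq_right₀ (mem_support_iff.mp hm), ← coeff_aeval_C_mul_X, hg]

theorem eq_sum_coeff_smul_X_pow [Fintype σ] (hn : n ≠ 0)
    (hf : ∀ m ∈ f.support, ∃ i, m = Finsupp.single i n) :
    f = ∑ i, coeff (Finsupp.single i n) f • X i ^ n := by
  classical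
  have hsub : f.support ⊆ Finset.univ.image fun i ↦ Finsupp.single i n := fun m hm ↦ by
    obtain ⟨i, rfl⟩ := hf m hm
    exact Finset.mem_image_of_mem _ (Finset.mem_univ i)
  calc f = ∑ m ∈ f.support, monomial m (coeff m f) := f.as_sum
    _ = ∑ m ∈ Finset.univ.image fun i ↦ Finsupp.single i n, monomial m (coeff m f) :=
      Finset.sum_subset hsub fun m _ hm ↦ by rw [notMem_support_iff.mp hm, monomial_zero]
    _ = ∑ i, monomial (Finsupp.single i n) (coeff (Finsupp.single i n) f) :=
      Finset.sum_image (Finsupp.single_left_injective hn).injOn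
    _ = ∑ i, coeff (Finsupp.single i n) f • X i ^ n := by
      simp only [X_pow_eq_monomial, smul_monomial, smul_eq_mul, mul_one]

theorem degree_five_invariants_general [Fintype σ] [IsCancelMulZero R] {ζ : R}
    (hζ : IsPrimitiveRoot ζ n) (hcard : ¬ Fintype.card σ ∣ n) (hf : f.IsHomogeneous n)
    (hinv : ∀ g : σ → R, (∀ i, g i ^ n = 1) → ∏ i, g i = 1 →
      aeval (fun i ↦ C (g i) * X i) f = f) :
    ∃ c : σ → R, f = ∑ i, c i • X i ^ n := by
  have hn : n ≠ 0 := fun h ↦ hcard (h ▸ dvd_zero _)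
  refine ⟨_, eq_sum_coeff_smul_X_pow hn fun m hm ↦ ?_⟩
  have hdeg : m.degree = n := not_imp_comm.mp hf.coeff_eq_zero (mem_support_iff.mp hm)
  refine exists_eq_single_of_modEq hcard hdeg (modEq_of_prod_pow_eq_one hζ hn fun g hg hdet ↦ ?_)
  rw [← prod_pow_eq_one_of_aeval_C_mul_X_eq (hinv g hg hdet) hm]
  exact (Finsupp.prod_fintype _ _ fun _ ↦ pow_zero _).symm

end DiagonalSubstitution

/-- Every homogeneous polynomial of degree `5` in `ℂ[v₁,v₂,v₃]` that is invariant
under `G` (i.e. unchanged under every substitution `v_i ↦ g_i v_i` with `g ∈ G`)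
is a linear combination of `v₁⁵`, `v₂⁵` and `v₃⁵`. -/
theorem degree_five_invariants
    (f : MvPolynomial (Fin 3) ℂ)
    (hf : f.IsHomogeneous 5)
    (hinv : ∀ g ∈ Gset, aeval (fun i => MvPolynomial.C (g i) * X i) f = f) :
    ∃ c : Fin 3 → ℂ, f = c 0 • X 0 ^ 5 + c 1 • X 1 ^ 5 + c 2 • X 2 ^ 5 := by
  simpa only [Fin.sum_univ_three] using
    degree_five_invariants_general (Complex.isPrimitiveRoot_exp 5 (by norm_num)) (by decide) hf
      fun g hg hdet ↦ hinv g ⟨hg, by rwa [Fin.prod_univ_three] at hdet⟩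
end

section
/- The space of G-invariant elements of Sym⁴(V^∨) ⊗ Λ²(V), where V = ℂ³ is the standard representation of G, is 3-dimensional: it is spanned by v₁⁴ ⊗ ξ₂∧ξ₃, v₂⁴ ⊗ ξ₃∧ξ₁, and v₃⁴ ⊗ ξ₁∧ξ₂, and these three elements are linearly independent. -/
set_option synthInstance.maxHeartbeats 1000000
set_option maxHeartbeats 1000000

open MvPolynomial TensorProduct

noncomputable section

/-- `V = ℂ³`, the standard representation of `G`. -/
abbrev V := Fin 3 → ℂ

/-- The ambient space `ℂ[v₁,v₂,v₃] ⊗ Λ(V)`; the symmetric powers `Symⁱ(V^∨)` are the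
homogeneous components of the polynomial ring. -/
abbrev TensorSpace := MvPolynomial (Fin 3) ℂ ⊗[ℂ] ExteriorAlgebra ℂ V

/-- The diagonal matrix `g` as a linear endomorphism of `V`. -/
def diagMap (g : Fin 3 → ℂ) : V →ₗ[ℂ] V :=
  LinearMap.pi fun i => g i • LinearMap.proj i

/-- The action of the diagonal matrix `g` on `Sym(V^∨) ⊗ Λ(V)`: on polynomial
functions on `V` by the dual (contragredient) action `(g·f)(v) = f(g⁻¹·v)`, i.e. the
substitution `v_i ↦ g_i⁻¹ v_i`, and on the exterior algebra functorially. -/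
def tensorAct (g : Fin 3 → ℂ) : TensorSpace →ₗ[ℂ] TensorSpace :=
  TensorProduct.map
    (aeval fun i => MvPolynomial.C (g i)⁻¹ * MvPolynomial.X i).toLinearMap
    (ExteriorAlgebra.map (diagMap g)).toLinearMap

/-- The subspace `Sym⁴(V^∨) ⊗ Λ²(V)` of `ℂ[v₁,v₂,v₃] ⊗ Λ(V)`. -/
def Sym4Lambda2 : Submodule ℂ TensorSpace :=
  Submodule.map₂ (TensorProduct.mk ℂ _ _)
    (homogeneousSubmodule (Fin 3) ℂ 4)
    (⋀[ℂ]^2 V : Submodule ℂ (ExteriorAlgebra ℂ V))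

/-- The standard basis vector `ξ_k ∈ V` inside the exterior algebra. -/
def xi (k : Fin 3) : ExteriorAlgebra ℂ V :=
  ExteriorAlgebra.ι ℂ (Pi.single k 1)

/-- The three invariant elements `v₁⁴ ⊗ ξ₂∧ξ₃`, `v₂⁴ ⊗ ξ₃∧ξ₁`, `v₃⁴ ⊗ ξ₁∧ξ₂`. -/
def invBasis : Fin 3 → TensorSpace :=
  ![ (MvPolynomial.X 0 ^ 4) ⊗ₜ (xi 1 * xi 2),
     (MvPolynomial.X 1 ^ 4) ⊗ₜ (xi 2 * xi 0),
     (MvPolynomial.X 2 ^ 4) ⊗ₜ (xi 0 * xi 1) ]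

/-!
Since `det g = 1`, the bivector `ξ_{k+1}∧ξ_{k+2}` is scaled by `g_k⁻¹`, exactly like `v_k`. So the
tensors `v^a ⊗ ξ_{k+1}∧ξ_{k+2}` with `|a| = 4`, which form a basis of `Sym⁴(V^∨) ⊗ Λ²(V)`, are
eigenvectors on which `g` acts as on the quintic monomial `v^a v_k`, and the invariants are spanned
by the basis tensors for which `v^a v_k` is invariant. The elements `diag(ζ, ζ⁻¹, 1)` and
`diag(1, ζ, ζ⁻¹)` force the three exponents of an invariant monomial to agree mod 5; in degree 5
this leaves only the fifth powers, so that `v^a = v_k⁴`.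
-/

section CyclicWedge

variable {R M : Type*} [CommRing R] [AddCommGroup M] [Module R M]

/-- The bivectors `v₁∧v₂, v₂∧v₀, v₀∧v₁` attached to a triple of vectors: the one at `k` is the
Hodge dual of `v k` for an oriented orthonormal basis. Indices are cyclic in `Fin 3`, so no signs
occur. -/
def cyclicWedge (v : Fin 3 → M) (k : Fin 3) : ExteriorAlgebra R M :=
  ExteriorAlgebra.ι R (v (k + 1)) * ExteriorAlgebra.ι R (v (k + 2))

theorem ι_mul_ι_mem_span_cyclicWedge (v : Fin 3 → M) (i j : Fin 3) :
    ExteriorAlgebra.ι R (v i) * ExteriorAlgebra.ι R (v j) ∈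
      Submodule.span R (Set.range (cyclicWedge v)) := by
  have forward (k : Fin 3) : ExteriorAlgebra.ι R (v (k + 1)) * ExteriorAlgebra.ι R (v (k + 2)) ∈
      Submodule.span R (Set.range (cyclicWedge v)) := Submodule.subset_span ⟨k, rfl⟩
  have backward (k : Fin 3) : ExteriorAlgebra.ι R (v (k + 2)) * ExteriorAlgebra.ι R (v (k + 1)) ∈
      Submodule.span R (Set.range (cyclicWedge v)) := by
    rw [eq_neg_of_add_eq_zero_left (ExteriorAlgebra.ι_add_mul_swap (v (k + 2)) (v (k + 1)))]
    exact Submodule.neg_mem _ (forward k)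
  obtain rfl | ⟨k, rfl, rfl⟩ | ⟨k, rfl, rfl⟩ :
      i = j ∨ (∃ k, i = k + 1 ∧ j = k + 2) ∨ ∃ k, i = k + 2 ∧ j = k + 1 := by
    decide +revert
  · rw [ExteriorAlgebra.ι_sq_zero]
    exact Submodule.zero_mem _
  · exact forward k
  · exact backward k

theorem span_range_cyclicWedge {v : Fin 3 → M} (hv : Submodule.span R (Set.range v) = ⊤) :
    Submodule.span R (Set.range (cyclicWedge v)) = ⋀[R]^2 M := by
  have range_ι : LinearMap.range (ExteriorAlgebra.ι R : M →ₗ[R] _) =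
      Submodule.span R (Set.range (ExteriorAlgebra.ι R ∘ v)) := by
    rw [LinearMap.range_eq_map, ← hv, Submodule.map_span, ← Set.range_comp]
  rw [ExteriorAlgebra.exteriorPower, range_ι, pow_two, Submodule.span_mul_span]
  refine le_antisymm (Submodule.span_mono ?_) (Submodule.span_le.2 ?_)
  · rintro _ ⟨k, rfl⟩
    exact Set.mul_mem_mul ⟨k + 1, rfl⟩ ⟨k + 2, rfl⟩
  · rintro _ ⟨_, ⟨i, rfl⟩, _, ⟨j, rfl⟩, rfl⟩
    exact ι_mul_ι_mem_span_cyclicWedge v i j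

theorem linearIndependent_cyclicWedge [Nontrivial R] (b : Module.Basis (Fin 3) R M) :
    LinearIndependent R (cyclicWedge (R := R) b) := by
  have : Module.Free R M := .of_basis b
  have : Module.Finite R M := .of_basis b
  rw [linearIndependent_iff_card_eq_finrank_span, Set.finrank, span_range_cyclicWedge b.span_eq,
    exteriorPower.finrank_eq, Module.finrank_eq_card_basis b, Fintype.card_fin]
  rfl

theorem map_cyclicWedge {v : Fin 3 → M} {f : M →ₗ[R] M} {c : Fin 3 → R}
    (hf : ∀ i, f (v i) = c i • v i) (k : Fin 3) :
    ExteriorAlgebra.map f (cyclicWedge v k) = (c (k + 1) * c (k + 2)) • cyclicWedge v k := by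
  simp only [cyclicWedge, map_mul, ExteriorAlgebra.map_apply_ι, hf, map_smul, smul_mul_smul_comm]

end CyclicWedge

theorem mul_mul_cyclic_eq_prod {M : Type*} [CommMonoid M] (g : Fin 3 → M) (k : Fin 3) :
    g k * (g (k + 1) * g (k + 2)) = ∏ i, g i := by
  rw [← Equiv.prod_comp (Equiv.addLeft k) g, Fin.prod_univ_three]
  simp only [Equiv.coe_addLeft, add_zero, mul_assoc]

theorem aeval_C_mul_X_monomial {σ R : Type*} [CommSemiring R] (c : σ → R) (a : σ →₀ ℕ) (r : R) :
    aeval (fun i => C (c i) * X i) (monomial a r) =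
      (a.prod fun i n => c i ^ n) • monomial a r := by
  rw [aeval_monomial, monomial_eq, smul_eq_C_mul, map_finsuppProd]
  simp only [mul_pow, Finsupp.prod_mul, map_pow, algebraMap_eq]
  ring

theorem homogeneousSubmodule_eq_span_monomial (σ R : Type*) [CommSemiring R] (n : ℕ) :
    homogeneousSubmodule σ R n =
      Submodule.span R ((fun a => monomial a 1) '' {a | a.degree = n}) := by
  rw [homogeneousSubmodule_eq_finsupp_supported]
  exact AddMonoidAlgebra.supported_eq_span_single ..

theorem forall_apply_eq_iff_mem_span_of_weights {R M ι S : Type*} [Ring R] [NoZeroDivisors R]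
    [AddCommGroup M] [Module R M] {v : ι → M} (hv : LinearIndependent R v) {T : S → M →ₗ[R] M}
    {G : Set S} {χ : ι → S → R} (hT : ∀ g ∈ G, ∀ i, T g (v i) = χ i g • v i) {s : Set ι} {x : M}
    (hx : x ∈ Submodule.span R (v '' s)) :
    (∀ g ∈ G, T g x = x) ↔ x ∈ Submodule.span R (v '' {i ∈ s | ∀ g ∈ G, χ i g = 1}) := by
  refine ⟨fun hfix => ?_, fun hx g hg => ?_⟩
  · obtain ⟨l, hl, rfl⟩ := (Finsupp.mem_span_image_iff_linearCombination R).1 hx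
    have hcoeff : ∀ g ∈ G, ∀ i ∈ l.support, l i * (χ i g - 1) = 0 := fun g hg =>
      linearIndependent_iff'.1 hv _ _ <| by
        have := sub_eq_zero.2 (hfix g hg)
        simpa only [Finsupp.linearCombination_apply, Finsupp.sum, map_sum, map_smul, hT g hg,
          smul_smul, ← Finset.sum_sub_distrib, ← sub_smul, ← mul_sub_one] using this
    refine (Finsupp.mem_span_image_iff_linearCombination R).2 ⟨l, fun i hi => ⟨hl hi, ?_⟩, rfl⟩
    exact fun g hg => sub_eq_zero.1 <|
      (mul_eq_zero.1 (hcoeff g hg i hi)).resolve_left (Finsupp.mem_support_iff.1 hi)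
  · have hle : Submodule.span R (v '' {i ∈ s | ∀ g ∈ G, χ i g = 1}) ≤
        LinearMap.eqLocus (T g) LinearMap.id := by
      rw [Submodule.span_le]
      rintro _ ⟨i, ⟨-, hi⟩, rfl⟩
      simp [hT g hg, hi g hg]
    exact hle hx

theorem modEq_of_forall_mem_Gset_prod_eq_one {b : Fin 3 →₀ ℕ}
    (hb : ∀ g ∈ Gset, (b.prod fun i n => g i ^ n) = 1) :
    b 0 ≡ b 1 [MOD 5] ∧ b 1 ≡ b 2 [MOD 5] := by
  obtain ⟨ζ, hζ⟩ : ∃ ζ : ℂ, IsPrimitiveRoot ζ 5 := ⟨_, Complex.isPrimitiveRoot_exp 5 (by simp)⟩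
  have hζ0 : ζ ≠ 0 := hζ.ne_zero (by simp)
  have modEq_of_pow_eq {m n : ℕ} (h : ζ ^ m = ζ ^ n) : m ≡ n [MOD 5] := by
    rwa [hζ.eq_orderOf, ← (hζ.isOfFinOrder (by simp)).pow_eq_pow_iff_modEq]
  have h₀ : ![ζ, ζ⁻¹, 1] ∈ Gset :=
    ⟨by simp [Fin.forall_fin_succ, hζ.pow_eq_one], by simp [hζ0]⟩
  have h₁ : ![1, ζ, ζ⁻¹] ∈ Gset :=
    ⟨by simp [Fin.forall_fin_succ, hζ.pow_eq_one], by simp [hζ0]⟩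
  refine ⟨modEq_of_pow_eq ?_, modEq_of_pow_eq ?_⟩
  · simpa [Finsupp.prod_fintype, Fin.prod_univ_three, mul_inv_eq_one₀, hζ0] using hb _ h₀
  · simpa [Finsupp.prod_fintype, Fin.prod_univ_three, mul_inv_eq_one₀, hζ0] using hb _ h₁

theorem forall_mem_Gset_prod_eq_one_iff {b : Fin 3 →₀ ℕ} (hb : b.degree = 5) :
    (∀ g ∈ Gset, (b.prod fun i n => g i ^ n) = 1) ↔ ∃ k, b = Finsupp.single k 5 := by
  refine ⟨fun h => ?_, ?_⟩
  · obtain ⟨h₀₁, h₁₂⟩ := modEq_of_forall_mem_Gset_prod_eq_one h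
    rw [Finsupp.degree_eq_sum, Fin.sum_univ_three] at hb
    simp only [Nat.ModEq] at h₀₁ h₁₂
    obtain ⟨h₀, h₁, h₂⟩ | ⟨h₀, h₁, h₂⟩ | ⟨h₀, h₁, h₂⟩ :
        (b 0 = 5 ∧ b 1 = 0 ∧ b 2 = 0) ∨ (b 0 = 0 ∧ b 1 = 5 ∧ b 2 = 0) ∨
          (b 0 = 0 ∧ b 1 = 0 ∧ b 2 = 5) := by omega
    · exact ⟨0, Finsupp.ext fun i => by fin_cases i <;> simp [h₀, h₁, h₂]⟩
    · exact ⟨1, Finsupp.ext fun i => by fin_cases i <;> simp [h₀, h₁, h₂]⟩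
    · exact ⟨2, Finsupp.ext fun i => by fin_cases i <;> simp [h₀, h₁, h₂]⟩
  · rintro ⟨k, rfl⟩ g hg
    rw [Finsupp.prod_single_index (h := fun i n => g i ^ n) (pow_zero _), hg.1 k]

/-- The tensors `v^a ⊗ ξ_{k+1}∧ξ_{k+2}`, indexed by `(a, k)`: simultaneous eigenvectors of all
diagonal matrices. -/
def weightVector (p : (Fin 3 →₀ ℕ) × Fin 3) : TensorSpace :=
  monomial p.1 1 ⊗ₜ cyclicWedge (Pi.basisFun ℂ (Fin 3)) p.2

theorem weightVector_single (k : Fin 3) : weightVector (Finsupp.single k 4, k) = invBasis k := by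
  rw [weightVector, ← X_pow_eq_monomial]
  fin_cases k <;> simp [invBasis, cyclicWedge, xi]

theorem linearIndependent_weightVector : LinearIndependent ℂ weightVector :=
  (basisMonomials (Fin 3) ℂ).linearIndependent.tmul_of_isDomain
    (linearIndependent_cyclicWedge (Pi.basisFun ℂ (Fin 3)))

theorem Sym4Lambda2_eq_span_weightVector :
    Sym4Lambda2 = Submodule.span ℂ (weightVector '' {p | p.1.degree = 4}) := by
  rw [Sym4Lambda2, homogeneousSubmodule_eq_span_monomial,
    ← span_range_cyclicWedge (Pi.basisFun ℂ (Fin 3)).span_eq, Submodule.map₂_span_span]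
  congr 1
  ext t
  simp [weightVector, Set.mem_image2]

theorem diagMap_basisFun (g : Fin 3 → ℂ) (i : Fin 3) :
    diagMap g (Pi.basisFun ℂ (Fin 3) i) = g i • Pi.basisFun ℂ (Fin 3) i := by
  ext j
  obtain rfl | hij := eq_or_ne j i <;> simp_all [diagMap]

theorem tensorAct_weightVector {g : Fin 3 → ℂ} (hg : g ∈ Gset) (p : (Fin 3 →₀ ℕ) × Fin 3) :
    tensorAct g (weightVector p) =
      ((p.1 + Finsupp.single p.2 1).prod fun i n => g i ^ n)⁻¹ • weightVector p := by
  obtain ⟨a, k⟩ := p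
  have hk : g (k + 1) * g (k + 2) = (g k)⁻¹ :=
    eq_inv_of_mul_eq_one_right <| by rw [mul_mul_cyclic_eq_prod, Fin.prod_univ_three, hg.2]
  have hprod : ((a + Finsupp.single k 1).prod fun i n => g i ^ n)⁻¹ =
      (a.prod fun i n => (g i)⁻¹ ^ n) * (g k)⁻¹ := by
    rw [Finsupp.prod_add_index' (fun _ => pow_zero _) fun _ => pow_add _,
      Finsupp.prod_single_index (h := fun i n => g i ^ n) (pow_zero _), pow_one, mul_inv]
    simp only [Finsupp.prod, inv_pow, Finset.prod_inv_distrib]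
  rw [hprod, weightVector, tensorAct, TensorProduct.map_tmul, AlgHom.toLinearMap_apply,
    AlgHom.toLinearMap_apply, aeval_C_mul_X_monomial, map_cyclicWedge (diagMap_basisFun g), hk,
    TensorProduct.smul_tmul_smul]

theorem setOf_invariant_weights_eq_range :
    {p : (Fin 3 →₀ ℕ) × Fin 3 | p.1.degree = 4 ∧
      ∀ g ∈ Gset, ((p.1 + Finsupp.single p.2 1).prod fun i n => g i ^ n)⁻¹ = 1} =
    Set.range fun k => (Finsupp.single k 4, k) := by
  ext ⟨a, k⟩
  simp only [Set.mem_ofPred_eq, inv_eq_one, Set.mem_range, Prod.mk.injEq]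
  constructor
  · rintro ⟨ha, hinv⟩
    obtain ⟨j, hj⟩ := (forall_mem_Gset_prod_eq_one_iff (by simp [ha])).1 hinv
    obtain rfl : j = k := by
      by_contra hjk
      simpa [hjk] using DFunLike.congr_fun hj k
    refine ⟨j, add_right_cancel (b := Finsupp.single j 1) ?_, rfl⟩
    rw [hj, ← Finsupp.single_add]
  · rintro ⟨k, rfl, rfl⟩
    rw [← Finsupp.single_add]
    exact ⟨Finsupp.degree_single .., (forall_mem_Gset_prod_eq_one_iff (by simp)).2 ⟨k, rfl⟩⟩

/-- The space of `G`-invariant elements of `Sym⁴(V^∨) ⊗ Λ²(V)` is three-dimensional: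
it is exactly the span of `v₁⁴ ⊗ ξ₂∧ξ₃`, `v₂⁴ ⊗ ξ₃∧ξ₁`, `v₃⁴ ⊗ ξ₁∧ξ₂`, and these
three elements are linearly independent. -/
theorem sym4_lambda2_invariants :
    (∀ x ∈ Sym4Lambda2,
      ((∀ g ∈ Gset, tensorAct g x = x) ↔
        x ∈ Submodule.span ℂ (Set.range invBasis))) ∧
    LinearIndependent ℂ invBasis := by
  have comp_eq : weightVector ∘ (fun k => (Finsupp.single k 4, k)) = invBasis :=
    funext weightVector_single
  refine ⟨fun x hx => ?_, ?_⟩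
  · rw [Sym4Lambda2_eq_span_weightVector] at hx
    rw [forall_apply_eq_iff_mem_span_of_weights linearIndependent_weightVector
      (fun _ hg => tensorAct_weightVector hg) hx]
    simp only [Set.mem_ofPred_eq, setOf_invariant_weights_eq_range]
    rw [← Set.range_comp, comp_eq]
  · rw [← comp_eq]
    exact linearIndependent_weightVector.comp _ fun _ _ h => congrArg Prod.snd h

end
end

section
/- Let A = Λ(ℂ³) be the exterior algebra on ℂ³ with its standard ℤ-grading, carrying the G-action induced functorially by the action of G on ℂ³. Then: (a) every G-equivariant ℂ-linear map A ⊗ A ⊗ A → A that is homogeneous of degree +1 (i.e. maps Λ^{i₁} ⊗ Λ^{i₂} ⊗ Λ^{i₃} into Λ^{i₁+i₂+i₃+1} for all i₁,i₂,i₃) is zero; and (b) every G-equivariant ℂ-linear map A ⊗ A ⊗ A → A that is homogeneous of degree -2 is zero. -/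
set_option synthInstance.maxHeartbeats 1000000
set_option maxHeartbeats 1000000

noncomputable section

/-- `A = Λ(ℂ³)`, the exterior algebra on `ℂ³` with its standard grading. -/
abbrev A := ExteriorAlgebra ℂ V

/-- The action of the diagonal matrix `g` on the exterior algebra `A = Λ(ℂ³)`,
induced functorially from the action on `ℂ³`. -/
def extAct (g : Fin 3 → ℂ) : A →ₗ[ℂ] A :=
  (ExteriorAlgebra.map (diagMap g)).toLinearMap

/-- A trilinear map `φ : A ⊗ A ⊗ A → A` (curried) is `G`-equivariant if it commutes
with the action of every `g ∈ G`. -/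
def IsEquivariant (φ : A →ₗ[ℂ] A →ₗ[ℂ] A →ₗ[ℂ] A) : Prop :=
  ∀ g ∈ Gset, ∀ a₃ a₂ a₁ : A,
    φ (extAct g a₃) (extAct g a₂) (extAct g a₁) = extAct g (φ a₃ a₂ a₁)

/-!
The monomials `e_S`, for `S` a set of basis vectors, form a basis of `Λ(M)` of weight vectors for
the diagonal group. If `e_T` occurs in `φ(e_{S₁}, …, e_{Sₖ})`, let `m i` be the number of the `S_j`
containing `i`, and `n` the indicator function of `T`. Equivariance says that `m` and `n` define the
same character of the group of diagonal matrices of determinant one with entries `N`-th roots of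
unity, which forces `n - m` to be constant modulo `N`. Since `n - m` takes values in `[-k, 1]` and
`k + 2 ≤ N`, it is constant, so the degree `∑ (n - m)` of `φ` is divisible by the rank of `M`.
Neither `1` nor `-2` is divisible by `3`.
-/

open Module

section RootsOfUnity

variable {ι : Type*} [Fintype ι] {N : ℕ}

lemma add_modEq_add_of_forall_prod_pow_eq {G : Type*} [CommMonoid G] (hN : N ≠ 0) {ζ : G}
    (hζ : IsPrimitiveRoot ζ N) {m n : ι → ℕ}
    (h : ∀ g : ι → G, (∀ i, g i ^ N = 1) → ∏ i, g i = 1 → ∏ i, g i ^ m i = ∏ i, g i ^ n i)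
    (i j : ι) : m i + n j ≡ n i + m j [MOD N] := by
  classical
  have hfin : IsOfFinOrder ζ := isOfFinOrder_iff_pow_eq_one.2 ⟨N, hN.bot_lt, hζ.pow_eq_one⟩
  obtain ⟨N, rfl⟩ := Nat.exists_eq_add_one_of_ne_zero hN
  -- `ζ ^ N` is the inverse of `ζ`, so `g` tests the difference of the weights at `i` and `j`.
  let g : ι → G := Pi.mulSingle i ζ * Pi.mulSingle j (ζ ^ N)
  have root_pow (k : ℕ) : (ζ ^ k) ^ (N + 1) = 1 := by rw [pow_right_comm, hζ.pow_eq_one, one_pow]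
  have g_root (l : ι) : g l ^ (N + 1) = 1 := by
    simp only [g, Pi.mul_apply, Pi.mulSingle_apply, mul_pow, ite_pow, root_pow, hζ.pow_eq_one,
      one_pow, ite_self, mul_one]
  have g_prod : ∏ l, g l = 1 := by
    simp only [g, Pi.mul_apply, Finset.prod_mul_distrib, Fintype.prod_pi_mulSingle']
    rw [← pow_succ', hζ.pow_eq_one]
  have g_monomial (w : ι → ℕ) : ∏ l, g l ^ w l = ζ ^ (w i + N * w j) := by
    simp only [g, Pi.mul_apply, Pi.mulSingle_apply, mul_pow, ite_pow, one_pow,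
      Finset.prod_mul_distrib, Finset.prod_ite_eq', Finset.mem_univ, if_true, pow_add, pow_mul]
  have hmod : m i + N * m j ≡ n i + N * n j [MOD N + 1] := by
    rw [hζ.eq_orderOf, ← hfin.pow_eq_pow_iff_modEq, ← g_monomial, ← g_monomial]
    exact h g g_root g_prod
  obtain ⟨c, hc⟩ := hmod.dvd
  refine Nat.modEq_iff_dvd.2 ⟨c - (n j - m j), ?_⟩
  push_cast at hc ⊢
  linear_combination hc

lemma card_dvd_sum_sub_sum_of_add_modEq_add {m n : ι → ℕ} (hlt : ∀ i j, m i + n j < N)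
    (h : ∀ i j, m i + n j ≡ n i + m j [MOD N]) :
    (Fintype.card ι : ℤ) ∣ ∑ i, (n i : ℤ) - ∑ i, (m i : ℤ) := by
  rcases isEmpty_or_nonempty ι with _ | ⟨⟨i⟩⟩
  · simp
  have hconst (j : ι) : (n j : ℤ) - m j = n i - m i := by
    have := (h i j).eq_of_lt_of_lt (hlt i j) (by linarith [hlt j i])
    omega
  rw [← Finset.sum_sub_distrib, Finset.sum_congr rfl fun j _ ↦ hconst j, Finset.sum_const,
    Finset.card_univ, nsmul_eq_mul]
  exact dvd_mul_right _ _

end RootsOfUnity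

section Incidence

variable {ι κ : Type*} [Fintype ι] [DecidableEq ι] [Fintype κ] (S : κ → Finset ι)

lemma prod_prod_eq_prod_pow_card {G : Type*} [CommMonoid G] (g : ι → G) :
    ∏ k, ∏ i ∈ S k, g i = ∏ i, g i ^ Finset.card {k | i ∈ S k} := by
  rw [Finset.prod_comm' (t' := Finset.univ) (s' := fun i ↦ {k | i ∈ S k}) (by simp)]
  simp only [Finset.prod_const]

lemma sum_card_filter_mem : ∑ i, Finset.card {k | i ∈ S k} = ∑ k, (S k).card := by
  simpa [Finset.bipartiteAbove, Finset.bipartiteBelow] using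
    Finset.sum_card_bipartiteAbove_eq_sum_card_bipartiteBelow (s := .univ) (t := .univ)
      fun i k ↦ i ∈ S k

end Incidence

section Diagonal

lemma repr_apply_of_diagonal {R M ι : Type*} [CommSemiring R] [AddCommMonoid M] [Module R M]
    (b : Basis ι R M) {f : M →ₗ[R] M} {μ : ι → R} (hf : ∀ i, f (b i) = μ i • b i) (x : M) (i : ι) :
    b.repr (f x) i = μ i * b.repr x i := by
  have : b.coord i ∘ₗ f = μ i • b.coord i := b.ext fun j ↦ by
    by_cases h : j = i <;> simp [hf, h]
  exact LinearMap.congr_fun this x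

variable {R M ι : Type*} [CommRing R] [AddCommGroup M] [Module R M]

/-- The endomorphism with matrix `diag(g)` in the basis `b`. -/
def diagonalEnd (b : Basis ι R M) (g : ι → R) : M →ₗ[R] M :=
  b.constr R fun i ↦ g i • b i

variable [LinearOrder ι] (b : Basis ι R M)

lemma exteriorAlgebra_map_diagonalEnd_basis (g : ι → R) (s : Finset ι) :
    ExteriorAlgebra.map (diagonalEnd b g) (b.ExteriorAlgebra s) =
      (∏ i ∈ s, g i) • b.ExteriorAlgebra s := by
  let e : Fin s.card ↪o ι := s.orderEmbOfFin rfl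
  have hbasis : b.ExteriorAlgebra s = ExteriorAlgebra.ιMulti R s.card (b ∘ e) :=
    ExteriorAlgebra.basis_apply b s
  have hdiag : diagonalEnd b g ∘ b ∘ e = fun l ↦ g (e l) • (b ∘ e) l :=
    funext fun l ↦ b.constr_basis R _ (e l)
  have hprod : ∏ l, g (e l) = ∏ i ∈ s, g i := by
    conv_rhs => rw [← s.map_orderEmbOfFin_univ rfl, Finset.prod_map]
    rfl
  rw [hbasis, ExteriorAlgebra.map_apply_ιMulti, hdiag, ← hprod]
  exact AlternatingMap.map_smul_univ _ _ _

lemma repr_eq_zero_of_mem_exteriorPower {k : ℕ} {x : ExteriorAlgebra R M} (hx : x ∈ ⋀[R]^k M)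
    {s : Finset ι} (hs : s.card ≠ k) : b.ExteriorAlgebra.repr x s = 0 := by
  suffices ⋀[R]^k M ≤ LinearMap.ker (b.ExteriorAlgebra.coord s) from this hx
  rw [← exteriorPower.ιMulti_family_span_fixedDegree_of_span R b.span_eq, Submodule.span_le]
  rintro _ ⟨t, rfl⟩
  have hts : (t : Finset ι) ≠ s := fun h ↦ hs (h ▸ Set.powersetCard.card_eq t)
  rw [← ExteriorAlgebra.basis_apply_powersetCard]
  simp [hts]

end Diagonal

section Multilinear

variable {R M κ : Type*} [CommRing R] [AddCommGroup M] [Module R M]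

/-- Equivariance of a `κ`-ary multilinear operation on `Λ(M)` under the group of endomorphisms of
`M` that are diagonal in the basis `b`, have `N`-th roots of unity as entries and determinant `1`.
-/
def IsDiagonalEquivariant {ι : Type*} [Fintype ι] (N : ℕ) (b : Basis ι R M)
    (φ : MultilinearMap R (fun _ : κ ↦ ExteriorAlgebra R M) (ExteriorAlgebra R M)) : Prop :=
  ∀ g : ι → R, (∀ i, g i ^ N = 1) → ∏ i, g i = 1 → ∀ a,
    φ (fun k ↦ ExteriorAlgebra.map (diagonalEnd b g) (a k)) =
      ExteriorAlgebra.map (diagonalEnd b g) (φ a)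

variable [Fintype κ]

/-- Homogeneity of degree `d : ℤ` of a multilinear operation on `Λ(M)`, the exterior powers of
negative degree being zero. -/
def IsHomogeneousOfDegree (d : ℤ)
    (φ : MultilinearMap R (fun _ : κ ↦ ExteriorAlgebra R M) (ExteriorAlgebra R M)) : Prop :=
  ∀ (p : κ → ℕ) (a : κ → ExteriorAlgebra R M), (∀ k, a k ∈ ⋀[R]^(p k) M) →
    (∑ k, (p k : ℤ) + d < 0 → φ a = 0) ∧
      ∀ j : ℕ, (j : ℤ) = ∑ k, (p k : ℤ) + d → φ a ∈ ⋀[R]^j M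

variable {ι : Type*} [LinearOrder ι] {b : Basis ι R M} {d : ℤ}
  {φ : MultilinearMap R (fun _ : κ ↦ ExteriorAlgebra R M) (ExteriorAlgebra R M)}
  {S : κ → Finset ι} {T : Finset ι}

lemma IsHomogeneousOfDegree.card_eq_of_repr_ne_zero (hφ : IsHomogeneousOfDegree d φ)
    (hT : b.ExteriorAlgebra.repr (φ fun k ↦ b.ExteriorAlgebra (S k)) T ≠ 0) :
    (T.card : ℤ) = ∑ k, ((S k).card : ℤ) + d := by
  obtain ⟨hneg, hmem⟩ := hφ (fun k ↦ (S k).card) (fun k ↦ b.ExteriorAlgebra (S k)) fun k ↦ by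
    rw [ExteriorAlgebra.basis_apply]
    exact ExteriorAlgebra.ιMulti_range _ _ ⟨_, rfl⟩
  rcases lt_or_ge (∑ k, ((S k).card : ℤ) + d) 0 with hlt | hge
  · simp [hneg hlt] at hT
  · obtain ⟨j, hj⟩ := Int.eq_ofNat_of_zero_le hge
    rw [hj]
    by_contra hne
    exact hT (repr_eq_zero_of_mem_exteriorPower b (hmem j hj.symm) (mod_cast hne))

variable [Fintype ι] {N : ℕ}

lemma IsDiagonalEquivariant.prod_eq_of_repr_ne_zero [IsDomain R]
    (hφ : IsDiagonalEquivariant N b φ)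
    (hT : b.ExteriorAlgebra.repr (φ fun k ↦ b.ExteriorAlgebra (S k)) T ≠ 0)
    {g : ι → R} (hg : ∀ i, g i ^ N = 1) (hprod : ∏ i, g i = 1) :
    ∏ k, ∏ i ∈ S k, g i = ∏ i ∈ T, g i := by
  have h := hφ g hg hprod fun k ↦ b.ExteriorAlgebra (S k)
  simp only [exteriorAlgebra_map_diagonalEnd_basis, MultilinearMap.map_smul_univ] at h
  have hrepr := congrArg (fun x ↦ b.ExteriorAlgebra.repr x T) h
  rw [← AlgHom.toLinearMap_apply,
    repr_apply_of_diagonal _ (exteriorAlgebra_map_diagonalEnd_basis b g)] at hrepr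
  simp only [map_smul, Finsupp.smul_apply, smul_eq_mul] at hrepr
  exact mul_right_cancel₀ hT hrepr

theorem equivariant_trilinear_maps_of_degree_one_or_minus_two_vanish_general [IsDomain R] {ζ : R}
    (hζ : IsPrimitiveRoot ζ N) (hN : Fintype.card κ + 2 ≤ N) (hd : ¬ (Fintype.card ι : ℤ) ∣ d)
    (hequiv : IsDiagonalEquivariant N b φ) (hdeg : IsHomogeneousOfDegree d φ) : φ = 0 := by
  refine Basis.ext_multilinear (fun _ ↦ b.ExteriorAlgebra) fun S ↦
    b.ExteriorAlgebra.ext_elem fun T ↦ ?_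
  rw [zero_apply, map_zero, Finsupp.zero_apply]
  by_contra hT
  let m : ι → ℕ := fun i ↦ Finset.card {k | i ∈ S k}
  let n : ι → ℕ := fun i ↦ if i ∈ T then 1 else 0
  have hlt (i j : ι) : m i + n j < N := by
    have hm : m i ≤ Fintype.card κ := Finset.card_le_univ _
    have hn : n j ≤ 1 := by dsimp only [n]; split_ifs <;> simp
    omega
  have hchar (g : ι → R) (hg : ∀ i, g i ^ N = 1) (hprod : ∏ i, g i = 1) :
      ∏ i, g i ^ m i = ∏ i, g i ^ n i := by
    rw [← prod_prod_eq_prod_pow_card, hequiv.prod_eq_of_repr_ne_zero hT hg hprod]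
    simp [n, pow_ite, Finset.prod_ite_mem]
  have hmod := add_modEq_add_of_forall_prod_pow_eq (by omega) hζ hchar
  have hsum : ∑ i, (n i : ℤ) - ∑ i, (m i : ℤ) = d := by
    have hm : ∑ i, (m i : ℤ) = ∑ k, ((S k).card : ℤ) := mod_cast sum_card_filter_mem S
    have hn : ∑ i, (n i : ℤ) = T.card := by simp [n]
    linarith [hdeg.card_eq_of_repr_ne_zero hT]
  exact hd (hsum ▸ card_dvd_sum_sub_sum_of_add_modEq_add hlt hmod)

end Multilinear

section Trilinear

/-- A curried trilinear map, viewed as a multilinear map on families indexed by `Fin 3`. -/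
def trilinearUncurry {R M P : Type*} [CommSemiring R] [AddCommMonoid M] [Module R M]
    [AddCommMonoid P] [Module R P] (φ : M →ₗ[R] M →ₗ[R] M →ₗ[R] P) :
    MultilinearMap R (fun _ : Fin 3 ↦ M) P :=
  MultilinearMap.mk' (fun a ↦ φ (a 0) (a 1) (a 2))
    (fun a i x y ↦ by fin_cases i <;> simp) (fun a i c x ↦ by fin_cases i <;> simp)

lemma diagMap_eq_diagonalEnd (g : Fin 3 → ℂ) :
    diagMap g = diagonalEnd (Pi.basisFun ℂ (Fin 3)) g := by
  refine (Pi.basisFun ℂ (Fin 3)).ext fun i ↦ ?_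
  rw [diagonalEnd, Basis.constr_basis]
  ext j
  by_cases h : j = i <;> simp [diagMap, h]

lemma IsEquivariant.isDiagonalEquivariant {φ : A →ₗ[ℂ] A →ₗ[ℂ] A →ₗ[ℂ] A} (hφ : IsEquivariant φ) :
    IsDiagonalEquivariant 5 (Pi.basisFun ℂ (Fin 3)) (trilinearUncurry φ) := fun g hg hprod a ↦ by
  rw [← diagMap_eq_diagonalEnd]
  exact hφ g ⟨hg, by rwa [← Fin.prod_univ_three]⟩ (a 0) (a 1) (a 2)

lemma IsEquivariant.eq_zero_of_isHomogeneousOfDegree {φ : A →ₗ[ℂ] A →ₗ[ℂ] A →ₗ[ℂ] A}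
    (hφ : IsEquivariant φ) {d : ℤ} (hd : ¬ 3 ∣ d)
    (hdeg : IsHomogeneousOfDegree d (trilinearUncurry φ)) : φ = 0 := by
  have h := equivariant_trilinear_maps_of_degree_one_or_minus_two_vanish_general
    (Complex.isPrimitiveRoot_exp 5 (by norm_num)) (by simp) (by simpa using hd)
    hφ.isDiagonalEquivariant hdeg
  refine LinearMap.ext fun a₃ ↦ LinearMap.ext₂ fun a₂ a₁ ↦ ?_
  exact DFunLike.congr_fun h ![a₃, a₂, a₁]

end Trilinear

/-- (a) Every `G`-equivariant trilinear map `A ⊗ A ⊗ A → A` which is homogeneous of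
degree `+1` (mapping `Λ^{i₁} ⊗ Λ^{i₂} ⊗ Λ^{i₃}` into `Λ^{i₁+i₂+i₃+1}`) vanishes;
(b) every `G`-equivariant trilinear map `A ⊗ A ⊗ A → A` which is homogeneous of
degree `-2` (mapping `Λ^{i₁} ⊗ Λ^{i₂} ⊗ Λ^{i₃}` into `Λ^{i₁+i₂+i₃-2}`, which is `0`
when `i₁+i₂+i₃ < 2`) vanishes. -/
theorem equivariant_trilinear_maps_of_degree_one_or_minus_two_vanish :
    (∀ φ : A →ₗ[ℂ] A →ₗ[ℂ] A →ₗ[ℂ] A, IsEquivariant φ →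
      (∀ (i₁ i₂ i₃ : ℕ), ∀ a₁ ∈ ⋀[ℂ]^i₁ V, ∀ a₂ ∈ ⋀[ℂ]^i₂ V, ∀ a₃ ∈ ⋀[ℂ]^i₃ V,
        φ a₃ a₂ a₁ ∈ ⋀[ℂ]^(i₁ + i₂ + i₃ + 1) V) →
      φ = 0) ∧
    (∀ φ : A →ₗ[ℂ] A →ₗ[ℂ] A →ₗ[ℂ] A, IsEquivariant φ →
      (∀ (i₁ i₂ i₃ : ℕ), ∀ a₁ ∈ ⋀[ℂ]^i₁ V, ∀ a₂ ∈ ⋀[ℂ]^i₂ V, ∀ a₃ ∈ ⋀[ℂ]^i₃ V,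
        (i₁ + i₂ + i₃ < 2 → φ a₃ a₂ a₁ = 0) ∧
        (∀ j : ℕ, (j : ℤ) = (i₁ : ℤ) + i₂ + i₃ - 2 → φ a₃ a₂ a₁ ∈ ⋀[ℂ]^j V)) →
      φ = 0) := by
  constructor
  · intro φ hφ h
    refine hφ.eq_zero_of_isHomogeneousOfDegree (d := 1) (by decide) fun p a ha ↦ ?_
    rw [Fin.sum_univ_three]
    refine ⟨fun hneg ↦ by omega, fun j hj ↦ ?_⟩
    obtain rfl : j = p 2 + p 1 + p 0 + 1 := by omega
    exact h _ _ _ _ (ha 2) _ (ha 1) _ (ha 0)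
  · intro φ hφ h
    refine hφ.eq_zero_of_isHomogeneousOfDegree (d := -2) (by decide) fun p a ha ↦ ?_
    rw [Fin.sum_univ_three]
    obtain ⟨hneg, hmem⟩ := h _ _ _ _ (ha 2) _ (ha 1) _ (ha 0)
    exact ⟨fun hlt ↦ hneg (by omega), fun j hj ↦ hmem j (by omega)⟩

end
end
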